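/- There exists a finite set S of 308 points in ℝ² and two points p, q ∈ S with dist(p,q) = √(11/3), such that the unit-distance graph on S is 4-colorable and every proper 4-coloring c of this graph satisfies c p ≠ c q (i.e., {p,q} is a non-monochromatic pair at distance √(11/3)). -/

import Mathlib

/-! ### Points with coordinates in `ℤ[√33]` and `√3 ℤ + √11 ℤ` -/

/-- The natural numbers `a, b, c, d` encode the point
`((a + b √33) / 12, (c √3 + d √11) / 12)` of the plane. -/
structure LatticePoint where
  a : ℕ
  b : ℕ
  c : ℕ
  d : ℕ

namespace LatticePoint

noncomputable def toPlane (p : LatticePoint) : EuclideanSpace ℝ (Fin 2) :=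
  !₂[(p.a + p.b * √33) / 12, (p.c * √3 + p.d * √11) / 12]

/-- Decides whether two encoded points are at distance one: the squared distance is an element of
`ℚ(√33)`, whose two coefficients are compared without subtraction. -/
def unitDist : LatticePoint → LatticePoint → Bool
  | ⟨a, b, c, d⟩, ⟨a', b', c', d'⟩ =>
    cond (Nat.beq
        (Nat.add (Nat.add (Nat.mul a a) (Nat.mul a' a'))
          (Nat.add (Nat.mul 33 (Nat.add (Nat.mul b b) (Nat.mul b' b')))
            (Nat.add (Nat.mul 3 (Nat.add (Nat.mul c c) (Nat.mul c' c')))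
              (Nat.mul 11 (Nat.add (Nat.mul d d) (Nat.mul d' d'))))))
        (Nat.add 144 (Nat.mul 2 (Nat.add (Nat.mul a a') (Nat.add (Nat.mul 33 (Nat.mul b b'))
          (Nat.add (Nat.mul 3 (Nat.mul c c')) (Nat.mul 11 (Nat.mul d d'))))))))
      (Nat.beq
        (Nat.add (Nat.add (Nat.mul a b) (Nat.mul a' b')) (Nat.add (Nat.mul c d) (Nat.mul c' d')))
        (Nat.add (Nat.add (Nat.mul a b') (Nat.mul a' b)) (Nat.add (Nat.mul c d') (Nat.mul c' d))))
      false

theorem unitDist_mk_eq_true_iff (a b c d a' b' c' d' : ℕ) :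
    unitDist ⟨a, b, c, d⟩ ⟨a', b', c', d'⟩ = true ↔
      a * a + a' * a' + (33 * (b * b + b' * b') + (3 * (c * c + c' * c') +
          11 * (d * d + d' * d'))) =
        144 + 2 * (a * a' + (33 * (b * b') + (3 * (c * c') + 11 * (d * d')))) ∧
      a * b + a' * b' + (c * d + c' * d') = a * b' + a' * b + (c * d' + c' * d) := by
  change cond _ _ _ = true ↔ _
  rw [Bool.cond_false_right, Bool.and_eq_true, Nat.beq_eq, Nat.beq_eq]
  rfl

end LatticePoint

theorem irrational_sqrt_thirtyThree : Irrational √33 := by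
  have h : ¬ IsSquare 33 := by
    rintro ⟨n, hn⟩
    have : n < 6 := by nlinarith
    interval_cases n <;> omega
  exact_mod_cast irrational_sqrt_natCast_iff.mpr h

theorem int_add_mul_sqrt_thirtyThree_eq_zero {x y : ℤ} (h : (x : ℝ) + y * √33 = 0) :
    x = 0 ∧ y = 0 := by
  have hy : y = 0 := by
    by_contra hy
    refine (irrational_sqrt_thirtyThree.intCast_mul hy).ne_int (-x) ?_
    push_cast
    linarith
  subst hy
  simpa using h

theorem sqrt_three_mul_sqrt_eleven : √3 * √11 = √33 := by
  rw [← Real.sqrt_mul (by norm_num)]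
  norm_num

namespace LatticePoint

theorem toPlane_injective : Function.Injective toPlane := by
  rintro ⟨a, b, c, d⟩ ⟨a', b', c', d'⟩ h
  have h0 := congrArg (fun x : EuclideanSpace ℝ (Fin 2) => x 0) h
  have h1 := congrArg (fun x : EuclideanSpace ℝ (Fin 2) => x 1) h
  simp only [toPlane, PiLp.toLp_apply, Matrix.cons_val_zero, Matrix.cons_val_one] at h0 h1
  have hx : (((a : ℤ) - a' : ℤ) : ℝ) + (((b : ℤ) - b' : ℤ) : ℝ) * √33 = 0 := by
    push_cast
    linarith
  have hy : ((3 * ((c : ℤ) - c') : ℤ) : ℝ) + (((d : ℤ) - d' : ℤ) : ℝ) * √33 = 0 := by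
    have h3 : √3 * √3 = 3 := Real.mul_self_sqrt (by norm_num)
    have h2 : (c * √3 + d * √11) * √3 = (c' * √3 + d' * √11) * √3 := by
      congr 1
      linarith
    rw [← sqrt_three_mul_sqrt_eleven]
    push_cast
    linear_combination h2 - (c - c' : ℝ) * h3
  have := int_add_mul_sqrt_thirtyThree_eq_zero hx
  have := int_add_mul_sqrt_thirtyThree_eq_zero hy
  simp only [mk.injEq]
  omega

theorem dist_toPlane_eq_one_iff (p q : LatticePoint) :
    dist p.toPlane q.toPlane = 1 ↔ p.unitDist q = true := by
  obtain ⟨a, b, c, d⟩ := p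
  obtain ⟨a', b', c', d'⟩ := q
  have h3 : √3 * √3 = 3 := Real.mul_self_sqrt (by norm_num)
  have h11 : √11 * √11 = 11 := Real.mul_self_sqrt (by norm_num)
  have h33 : √33 * √33 = 33 := Real.mul_self_sqrt (by norm_num)
  have h := sqrt_three_mul_sqrt_eleven
  rw [EuclideanSpace.dist_eq, Real.sqrt_eq_one]
  simp only [toPlane, Fin.sum_univ_two, Real.dist_eq, sq_abs, PiLp.toLp_apply,
    Matrix.cons_val_zero, Matrix.cons_val_one, unitDist_mk_eq_true_iff]
  have key : (((a : ℝ) + b * √33) / 12 - (a' + b' * √33) / 12) ^ 2 +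
      ((c * √3 + d * √11) / 12 - (c' * √3 + d' * √11) / 12) ^ 2 - 1 =
      ((((a : ℤ) - a') ^ 2 + 33 * ((b : ℤ) - b') ^ 2 + 3 * ((c : ℤ) - c') ^ 2 +
          11 * ((d : ℤ) - d') ^ 2 - 144 : ℤ) +
        ((2 * (((a : ℤ) - a') * (b - b') + ((c : ℤ) - c') * (d - d')) : ℤ) : ℝ) * √33) / 144 := by
    push_cast
    linear_combination ((b - b' : ℝ) ^ 2 / 144) * h33 + ((c - c' : ℝ) ^ 2 / 144) * h3 +
      ((d - d' : ℝ) ^ 2 / 144) * h11 + (2 * (c - c' : ℝ) * (d - d') / 144) * h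
  rw [← sub_eq_zero, key, div_eq_zero_iff, or_iff_left (by norm_num)]
  constructor
  · intro h0
    obtain ⟨h1, h2⟩ := int_add_mul_sqrt_thirtyThree_eq_zero h0
    constructor <;> zify <;> linarith
  · rintro ⟨h1, h2⟩
    zify at h1 h2
    have h1' : ((a : ℤ) - a') ^ 2 + 33 * ((b : ℤ) - b') ^ 2 + 3 * ((c : ℤ) - c') ^ 2 +
        11 * ((d : ℤ) - d') ^ 2 - 144 = 0 := by linarith
    have h2' : 2 * (((a : ℤ) - a') * (b - b') + ((c : ℤ) - c') * (d - d')) = 0 := by linarith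
    rw [h1', h2']
    simp

end LatticePoint

/-! ### Adjacency matrices packed into natural numbers -/

/-- Bit `j` tells whether `p` is at distance one from the `j`-th point of the list. -/
def adjacencyRow (p : LatticePoint) : List LatticePoint → ℕ
  | [] => 0
  | q :: l => (p.unitDist q).toNat + 2 * adjacencyRow p l

/-- The rows of the points of the second list, each occupying `cols.length` bits. -/
def adjacencyMatrix (cols : List LatticePoint) : List LatticePoint → ℕ
  | [] => 0
  | p :: l => adjacencyRow p cols + 2 ^ cols.length * adjacencyMatrix cols l

theorem testBit_adjacencyRow (p : LatticePoint) (l : List LatticePoint) (j : ℕ)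
    (hj : j < l.length) : (adjacencyRow p l).testBit j = p.unitDist l[j] := by
  induction l generalizing j with
  | nil => simp at hj
  | cons q l ih =>
    cases j with
    | zero => cases h : p.unitDist q <;> simp [adjacencyRow, Nat.testBit_zero, h]
    | succ j =>
      have hj' : j < l.length := by simpa using hj
      have hdiv : ((p.unitDist q).toNat + 2 * adjacencyRow p l) / 2 = adjacencyRow p l := by
        cases p.unitDist q <;> simp; omega
      rw [Nat.testBit_succ, adjacencyRow, hdiv, ih j hj']
      simp

theorem adjacencyRow_lt (p : LatticePoint) (l : List LatticePoint) :
    adjacencyRow p l < 2 ^ l.length := by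
  induction l with
  | nil => simp [adjacencyRow]
  | cons q l ih =>
    have : (p.unitDist q).toNat ≤ 1 := Bool.toNat_le _
    simp only [adjacencyRow, List.length_cons, pow_succ]
    omega

theorem testBit_adjacencyMatrix (cols l : List LatticePoint) (i j : ℕ) (hi : i < l.length)
    (hj : j < cols.length) :
    (adjacencyMatrix cols l >>> (cols.length * i)).testBit j = l[i].unitDist cols[j] := by
  induction l generalizing i with
  | nil => simp at hi
  | cons p l ih =>
    have hlt := adjacencyRow_lt p cols
    cases i with
    | zero =>
      rw [adjacencyMatrix, Nat.add_comm]
      simp [Nat.testBit_two_pow_mul_add _ hlt, hj, testBit_adjacencyRow]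
    | succ i =>
      have hi' : i < l.length := by simpa using hi
      rw [List.getElem_cons_succ, ← ih i hi']
      have : cols.length * (i + 1) + j = cols.length + (cols.length * i + j) := by ring
      rw [adjacencyMatrix, Nat.add_comm, Nat.testBit_shiftRight, Nat.testBit_shiftRight, this,
        Nat.testBit_two_pow_mul_add _ hlt]
      simp

/-! ### Refuting four-colorings by branching and unit propagation -/

/-- `withValue n f` is `f n`, arranged so that evaluation replaces `n` by its value first. -/
def withValue {α : Type} (n : ℕ) (f : ℕ → α) : α :=
  match n with
  | 0 => f 0
  | k + 1 => f (Nat.succ k)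

@[simp]
theorem withValue_eq {α : Type} (n : ℕ) (f : ℕ → α) : withValue n f = f n := by
  cases n <;> rfl

/-- Remove the bits of `b` from `a`. -/
def clearBits (a b : ℕ) : ℕ := Nat.xor a (Nat.land a b)

theorem testBit_clearBits (a b i : ℕ) :
    (clearBits a b).testBit i = (a.testBit i && !b.testBit i) := by
  change (a ^^^ (a &&& b)).testBit i = _
  rw [Nat.testBit_xor, Nat.testBit_and]
  cases a.testBit i <;> cases b.testBit i <;> rfl

/-- The largest power of two dividing `u`, if `u ≠ 0`. -/
def lowestBit (u : ℕ) : ℕ := Nat.xor u (Nat.land u (Nat.sub u 1))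

/-- Bit `v` of `aₖ` tells whether color `k` is still admitted at vertex `v`; the coloring `c` of
the vertices below `n` uses admitted colors only. -/
def Admits (n : ℕ) (c : ℕ → Fin 4) (a₀ a₁ a₂ a₃ : ℕ) : Prop :=
  ∀ v < n, (c v = 0 → a₀.testBit v = true) ∧ (c v = 1 → a₁.testBit v = true) ∧
    (c v = 2 → a₂.testBit v = true) ∧ (c v = 3 → a₃.testBit v = true)

/-- The vertices that admit at least one color. -/
def unionBits (a₀ a₁ a₂ a₃ : ℕ) : ℕ := Nat.lor (Nat.lor a₀ a₁) (Nat.lor a₂ a₃)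

/-- The vertices of `rem` that admit exactly one color. -/
def unitBits (rem a₀ a₁ a₂ a₃ : ℕ) : ℕ :=
  Nat.land rem (Nat.xor (unionBits a₀ a₁ a₂ a₃)
    (Nat.lor (Nat.lor (Nat.land a₀ a₁) (Nat.land a₂ a₃))
      (Nat.land (Nat.lor a₀ a₁) (Nat.lor a₂ a₃))))

/-- Unit propagation: as long as a vertex of `rem` admits exactly one color, remove that color at
its neighbors. The result is `true` when some vertex admits no color; when nothing is left to
propagate, the continuation `k` decides. -/
def propagate (n full adj : ℕ) (k : ℕ → ℕ → ℕ → ℕ → ℕ → Bool) :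
    (fuel rem a₀ a₁ a₂ a₃ : ℕ) → Bool
  | 0, rem, a₀, a₁, a₂, a₃ => k rem a₀ a₁ a₂ a₃
  | fuel + 1, rem, a₀, a₁, a₂, a₃ =>
    cond (Nat.beq (Nat.land (unionBits a₀ a₁ a₂ a₃) full) full)
      (cond (Nat.beq (unitBits rem a₀ a₁ a₂ a₃) 0) (k rem a₀ a₁ a₂ a₃)
        (withValue (lowestBit (unitBits rem a₀ a₁ a₂ a₃)) fun b =>
          withValue (Nat.div adj (Nat.pow b n)) fun row =>
          withValue (Nat.xor rem b) fun rem =>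
          cond (Nat.ble b full)
            (cond (Nat.beq (Nat.land a₀ b) b)
              (withValue (clearBits a₀ row) fun a₀ => propagate n full adj k fuel rem a₀ a₁ a₂ a₃)
            (cond (Nat.beq (Nat.land a₁ b) b)
              (withValue (clearBits a₁ row) fun a₁ => propagate n full adj k fuel rem a₀ a₁ a₂ a₃)
            (cond (Nat.beq (Nat.land a₂ b) b)
              (withValue (clearBits a₂ row) fun a₂ => propagate n full adj k fuel rem a₀ a₁ a₂ a₃)
              (withValue (clearBits a₃ row) fun a₃ =>
                propagate n full adj k fuel rem a₀ a₁ a₂ a₃))))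
            false))
      true

/-- A case distinction: `node v k l r` treats by `l` the case that vertex `v` has color `k`, and
by `r` the case that it has not. -/
inductive CaseTree where
  | leaf
  | node (v k : ℕ) (l r : CaseTree)

/-- Run unit propagation after every case distinction of the tree and check that it fails in all
cases. -/
def CaseTree.refute (n full adj : ℕ) : CaseTree → (rem a₀ a₁ a₂ a₃ : ℕ) → Bool
  | .leaf, _, _, _, _, _ => false
  | .node v k l r, rem, a₀, a₁, a₂, a₃ =>
    withValue (Nat.shiftLeft 1 v) fun b =>
    withValue (clearBits a₀ b) fun b₀ => withValue (clearBits a₁ b) fun b₁ =>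
    withValue (clearBits a₂ b) fun b₂ => withValue (clearBits a₃ b) fun b₃ =>
    match k with
    | 0 => propagate n full adj (l.refute n full adj) n rem a₀ b₁ b₂ b₃ &&
        propagate n full adj (r.refute n full adj) n rem b₀ a₁ a₂ a₃
    | 1 => propagate n full adj (l.refute n full adj) n rem b₀ a₁ b₂ b₃ &&
        propagate n full adj (r.refute n full adj) n rem a₀ b₁ a₂ a₃
    | 2 => propagate n full adj (l.refute n full adj) n rem b₀ b₁ a₂ b₃ &&
        propagate n full adj (r.refute n full adj) n rem a₀ a₁ b₂ a₃
    | _ => propagate n full adj (l.refute n full adj) n rem b₀ b₁ b₂ a₃ &&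
        propagate n full adj (r.refute n full adj) n rem a₀ a₁ a₂ b₃

theorem exists_lowestBit_eq_two_pow {u : ℕ} (hu : u ≠ 0) :
    ∃ v, lowestBit u = 2 ^ v ∧ u.testBit v = true := by
  induction u using Nat.strong_induction_on with
  | _ u ih =>
    change ∃ v, u ^^^ (u &&& (u - 1)) = 2 ^ v ∧ _
    obtain ⟨m, rfl | rfl⟩ := Nat.even_or_odd' u
    · obtain ⟨v, hv, hm⟩ := ih m (by omega) (by omega)
      refine ⟨v + 1, ?_, by simpa [Nat.testBit_succ] using hm⟩
      change m ^^^ (m &&& (m - 1)) = 2 ^ v at hv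
      rw [pow_succ, ← hv]
      refine Nat.eq_of_testBit_eq fun i => ?_
      have hdiv : (2 * m - 1) / 2 = m - 1 := by omega
      simp only [Nat.testBit_xor, Nat.testBit_and]
      cases i <;> simp [Nat.testBit_succ, hdiv]
    · refine ⟨0, Nat.eq_of_testBit_eq fun i => ?_, by simp⟩
      have hdiv : (2 * m + 1) / 2 = m := by omega
      simp only [Nat.testBit_xor, Nat.testBit_and]
      cases i <;> simp [Nat.testBit_succ, hdiv]

theorem beq_land_two_pow (a v : ℕ) : Nat.beq (Nat.land a (2 ^ v)) (2 ^ v) = a.testBit v := by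
  rw [Bool.eq_iff_iff, Nat.beq_eq]
  change a &&& 2 ^ v = 2 ^ v ↔ _
  rw [Nat.and_two_pow]
  cases a.testBit v <;> simp [(Nat.two_pow_pos v).ne]

theorem testBit_unionBits (a₀ a₁ a₂ a₃ v : ℕ) :
    (unionBits a₀ a₁ a₂ a₃).testBit v =
      ((a₀.testBit v || a₁.testBit v) || (a₂.testBit v || a₃.testBit v)) := by
  change ((a₀ ||| a₁) ||| (a₂ ||| a₃)).testBit v = _
  simp only [Nat.testBit_or]

theorem testBit_unitBits (rem a₀ a₁ a₂ a₃ v : ℕ) :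
    (unitBits rem a₀ a₁ a₂ a₃).testBit v =
      (rem.testBit v &&
        (((a₀.testBit v || a₁.testBit v) || (a₂.testBit v || a₃.testBit v)) ^^
        (((a₀.testBit v && a₁.testBit v) || (a₂.testBit v && a₃.testBit v)) ||
          ((a₀.testBit v || a₁.testBit v) && (a₂.testBit v || a₃.testBit v))))) := by
  change (rem &&& (unionBits a₀ a₁ a₂ a₃ ^^^
    (((a₀ &&& a₁) ||| (a₂ &&& a₃)) ||| ((a₀ ||| a₁) &&& (a₂ ||| a₃))))).testBit v = _
  simp only [Nat.testBit_and, Nat.testBit_xor, Nat.testBit_or, testBit_unionBits]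

theorem fin_four_cases (x : Fin 4) : x = 0 ∨ x = 1 ∨ x = 2 ∨ x = 3 := by
  revert x
  decide

theorem Admits.beq_land_unionBits {n : ℕ} {c : ℕ → Fin 4} {a₀ a₁ a₂ a₃ : ℕ}
    (h : Admits n c a₀ a₁ a₂ a₃) :
    Nat.beq (Nat.land (unionBits a₀ a₁ a₂ a₃) (2 ^ n - 1)) (2 ^ n - 1) = true := by
  rw [Nat.beq_eq]
  change unionBits a₀ a₁ a₂ a₃ &&& (2 ^ n - 1) = _
  refine Nat.eq_of_testBit_eq fun v => ?_
  rw [Nat.testBit_and, Nat.testBit_two_pow_sub_one, testBit_unionBits]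
  by_cases hv : v < n
  · have hcases := h v hv
    rcases fin_four_cases (c v) with h0 | h0 | h0 | h0 <;> simp_all
  · simp [hv]

theorem propagate_eq_false {n adj : ℕ} {c : ℕ → Fin 4}
    (hc : ∀ v < n, ∀ w < n, (adj >>> (n * v)).testBit w = true → c v ≠ c w)
    {k : ℕ → ℕ → ℕ → ℕ → ℕ → Bool}
    (hk : ∀ rem a₀ a₁ a₂ a₃, Admits n c a₀ a₁ a₂ a₃ → k rem a₀ a₁ a₂ a₃ = false)
    (fuel rem a₀ a₁ a₂ a₃ : ℕ) (h : Admits n c a₀ a₁ a₂ a₃) :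
    propagate n (2 ^ n - 1) adj k fuel rem a₀ a₁ a₂ a₃ = false := by
  induction fuel generalizing rem a₀ a₁ a₂ a₃ with
  | zero => exact hk _ _ _ _ _ h
  | succ fuel ih =>
    rw [propagate, h.beq_land_unionBits, cond_true]
    cases hu : Nat.beq (unitBits rem a₀ a₁ a₂ a₃) 0 with
    | true => exact hk _ _ _ _ _ h
    | false =>
      rw [cond_false]
      have hu0 : unitBits rem a₀ a₁ a₂ a₃ ≠ 0 := fun h0 => by simp [h0] at hu
      obtain ⟨v, hb, hunit⟩ := exists_lowestBit_eq_two_pow hu0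
      simp only [withValue_eq, hb, beq_land_two_pow]
      cases hvn : Nat.ble (2 ^ v) (2 ^ n - 1) with
      | false => rfl
      | true =>
        have hv : v < n := by
          have h1 : 2 ^ v ≤ 2 ^ n - 1 := Nat.le_of_ble_eq_true hvn
          have h2 : 0 < 2 ^ n := by positivity
          exact (Nat.pow_lt_pow_iff_right (by norm_num)).mp (by omega : 2 ^ v < 2 ^ n)
        have hrow : Nat.div adj (Nat.pow (2 ^ v) n) = adj >>> (n * v) := by
          rw [Nat.shiftRight_eq_div_pow, mul_comm, pow_mul]
          rfl
        rw [cond_true, hrow]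
        rw [testBit_unitBits] at hunit
        have hcases := h v hv
        have hclear : ∀ a w : ℕ, w < n → c w = c v → a.testBit w = true →
            (clearBits a (adj >>> (n * v))).testBit w = true := by
          intro a w hw hcw ha
          rw [testBit_clearBits, ha, Bool.true_and, Bool.not_eq_true']
          by_contra hbit
          exact hc v hv w hw (by simpa using hbit) hcw.symm
        cases h₀ : a₀.testBit v with
        | true =>
          have hcv : c v = 0 := by
            rcases fin_four_cases (c v) with h0 | h0 | h0 | h0 <;> simp_all
          refine ih _ _ _ _ _ fun w hw => ⟨fun hcw => ?_, (h w hw).2⟩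
          exact hclear _ w hw (hcw.trans hcv.symm) ((h w hw).1 hcw)
        | false =>
          cases h₁ : a₁.testBit v with
          | true =>
            have hcv : c v = 1 := by
              rcases fin_four_cases (c v) with h0 | h0 | h0 | h0 <;> simp_all
            refine ih _ _ _ _ _ fun w hw => ⟨(h w hw).1, fun hcw => ?_, (h w hw).2.2⟩
            exact hclear _ w hw (hcw.trans hcv.symm) ((h w hw).2.1 hcw)
          | false =>
            cases h₂ : a₂.testBit v with
            | true =>
              have hcv : c v = 2 := by
                rcases fin_four_cases (c v) with h0 | h0 | h0 | h0 <;> simp_all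
              refine ih _ _ _ _ _ fun w hw =>
                ⟨(h w hw).1, (h w hw).2.1, fun hcw => ?_, (h w hw).2.2.2⟩
              exact hclear _ w hw (hcw.trans hcv.symm) ((h w hw).2.2.1 hcw)
            | false =>
              have hcv : c v = 3 := by
                rcases fin_four_cases (c v) with h0 | h0 | h0 | h0 <;> simp_all
              refine ih _ _ _ _ _ fun w hw =>
                ⟨(h w hw).1, (h w hw).2.1, (h w hw).2.2.1, fun hcw => ?_⟩
              exact hclear _ w hw (hcw.trans hcv.symm) ((h w hw).2.2.2 hcw)

theorem CaseTree.refute_eq_false {n adj : ℕ} {c : ℕ → Fin 4}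
    (hc : ∀ v < n, ∀ w < n, (adj >>> (n * v)).testBit w = true → c v ≠ c w) (t : CaseTree)
    (rem a₀ a₁ a₂ a₃ : ℕ) (h : Admits n c a₀ a₁ a₂ a₃) :
    t.refute n (2 ^ n - 1) adj rem a₀ a₁ a₂ a₃ = false := by
  induction t generalizing rem a₀ a₁ a₂ a₃ with
  | leaf => rfl
  | node v k l r ihl ihr =>
    have hclear : ∀ (a w : ℕ) (i j : Fin 4), c v = i → c w = j → i ≠ j → a.testBit w = true →
        (clearBits a (Nat.shiftLeft 1 v)).testBit w = true := by
      rintro a w i j rfl rfl hij ha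
      have hvw : v ≠ w := fun hvw => hij (by rw [hvw])
      rw [testBit_clearBits, ha]
      change (true && !(1 <<< v).testBit w) = true
      simp [Nat.shiftLeft_eq, hvw]
    simp only [CaseTree.refute, withValue_eq]
    have hl := fun rem a₀ a₁ a₂ a₃ => propagate_eq_false hc ihl n rem a₀ a₁ a₂ a₃
    have hr := fun rem a₀ a₁ a₂ a₃ => propagate_eq_false hc ihr n rem a₀ a₁ a₂ a₃
    split
    · by_cases hcv : c v = 0
      · rw [hl _ _ _ _ _ fun w hw => ⟨(h w hw).1,
          fun e => hclear _ w _ _ hcv e (by decide) ((h w hw).2.1 e),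
          fun e => hclear _ w _ _ hcv e (by decide) ((h w hw).2.2.1 e),
          fun e => hclear _ w _ _ hcv e (by decide) ((h w hw).2.2.2 e)⟩, Bool.false_and]
      · rw [hr _ _ _ _ _ fun w hw => ⟨fun e => hclear _ w _ _ rfl e hcv ((h w hw).1 e),
          (h w hw).2.1,
          (h w hw).2.2.1,
          (h w hw).2.2.2⟩, Bool.and_false]
    · by_cases hcv : c v = 1
      · rw [hl _ _ _ _ _ fun w hw => ⟨fun e => hclear _ w _ _ hcv e (by decide) ((h w hw).1 e),
          (h w hw).2.1,
          fun e => hclear _ w _ _ hcv e (by decide) ((h w hw).2.2.1 e),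
          fun e => hclear _ w _ _ hcv e (by decide) ((h w hw).2.2.2 e)⟩, Bool.false_and]
      · rw [hr _ _ _ _ _ fun w hw => ⟨(h w hw).1,
          fun e => hclear _ w _ _ rfl e hcv ((h w hw).2.1 e),
          (h w hw).2.2.1,
          (h w hw).2.2.2⟩, Bool.and_false]
    · by_cases hcv : c v = 2
      · rw [hl _ _ _ _ _ fun w hw => ⟨fun e => hclear _ w _ _ hcv e (by decide) ((h w hw).1 e),
          fun e => hclear _ w _ _ hcv e (by decide) ((h w hw).2.1 e),
          (h w hw).2.2.1,
          fun e => hclear _ w _ _ hcv e (by decide) ((h w hw).2.2.2 e)⟩, Bool.false_and]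
      · rw [hr _ _ _ _ _ fun w hw => ⟨(h w hw).1,
          (h w hw).2.1,
          fun e => hclear _ w _ _ rfl e hcv ((h w hw).2.2.1 e),
          (h w hw).2.2.2⟩, Bool.and_false]
    · by_cases hcv : c v = 3
      · rw [hl _ _ _ _ _ fun w hw => ⟨fun e => hclear _ w _ _ hcv e (by decide) ((h w hw).1 e),
          fun e => hclear _ w _ _ hcv e (by decide) ((h w hw).2.1 e),
          fun e => hclear _ w _ _ hcv e (by decide) ((h w hw).2.2.1 e),
          (h w hw).2.2.2⟩, Bool.false_and]
      · rw [hr _ _ _ _ _ fun w hw => ⟨(h w hw).1,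
          (h w hw).2.1,
          (h w hw).2.2.1,
          fun e => hclear _ w _ _ rfl e hcv ((h w hw).2.2.2 e)⟩, Bool.and_false]

/-- Checks by the case distinction `t` that no proper four-coloring of the unit-distance graph of
the points in `l` gives color `0` to the vertices `p` and `q`, color `1` to `x` and color `2`
to `y`. -/
def refutesEqualColors (l : List LatticePoint) (t : CaseTree) (p q x y : ℕ) : Bool :=
  withValue (adjacencyMatrix l l) fun adj =>
  withValue l.length fun n =>
  withValue (2 ^ n - 1) fun full =>
  withValue (clearBits full (2 ^ x ||| 2 ^ y)) fun a₀ =>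
  withValue (clearBits full (2 ^ p ||| 2 ^ q ||| 2 ^ y)) fun a₁ =>
  withValue (clearBits full (2 ^ p ||| 2 ^ q ||| 2 ^ x)) fun a₂ =>
  withValue (clearBits full (2 ^ p ||| 2 ^ q ||| (2 ^ x ||| 2 ^ y))) fun a₃ =>
  propagate n full adj (t.refute n full adj) n full a₀ a₁ a₂ a₃

theorem ne_of_refutesEqualColors {l : List LatticePoint} {t : CaseTree} {p q x y : ℕ}
    (h : refutesEqualColors l t p q x y = true) (c : ℕ → Fin 4)
    (hc : ∀ v w (hv : v < l.length) (hw : w < l.length), l[v].unitDist l[w] = true → c v ≠ c w)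
    (hp : c p = 0) (hx : c x = 1) (hy : c y = 2) : c q ≠ 0 := by
  intro hq
  have hadj : ∀ v < l.length, ∀ w < l.length,
      (adjacencyMatrix l l >>> (l.length * v)).testBit w = true → c v ≠ c w := by
    intro v hv w hw hbit
    rw [testBit_adjacencyMatrix l l v w hv hw] at hbit
    exact hc v w hv hw hbit
  simp only [refutesEqualColors, withValue_eq] at h
  rw [propagate_eq_false hadj (t.refute_eq_false hadj)] at h
  · exact Bool.false_ne_true h
  · intro v hv
    have ne_of_color : ∀ {i j : Fin 4} {u : ℕ}, c v = i → c u = j → i ≠ j → u ≠ v := by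
      rintro i j u rfl rfl hij rfl
      exact hij rfl
    simp only [testBit_clearBits, Nat.testBit_two_pow_sub_one, Nat.testBit_or,
      Nat.testBit_two_pow, hv, decide_true, Bool.true_and, Bool.not_eq_true',
      Bool.or_eq_false_iff, decide_eq_false_iff_not]
    refine ⟨fun hv => ⟨?_, ?_⟩, fun hv => ⟨⟨?_, ?_⟩, ?_⟩, fun hv => ⟨⟨?_, ?_⟩, ?_⟩,
      fun hv => ⟨⟨?_, ?_⟩, ?_, ?_⟩⟩ <;>
    first
    | exact ne_of_color hv hp (by decide)
    | exact ne_of_color hv hq (by decide)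
    | exact ne_of_color hv hx (by decide)
    | exact ne_of_color hv hy (by decide)

/-! ### The point set, a four-coloring of it, and the case distinction -/

def latticePoints : List LatticePoint :=
  [⟨24, 3, 8, 10⟩, ⟨21, 0, 7, 7⟩, ⟨21, 2, 1, 7⟩, ⟨33, 2, 13, 7⟩, ⟨18, 5, 6, 4⟩, ⟨27, 2, 13, 1⟩,
  ⟨24, 3, 2, 4⟩, ⟨27, 4, 11, 1⟩, ⟨27, 2, 3, 7⟩, ⟨15, 4, 15, 1⟩, ⟨15, 2, 15, 7⟩, ⟨30, 1, 6, 4⟩,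
  ⟨27, 2, 9, 1⟩, ⟨30, 3, 4, 4⟩, ⟨18, 1, 18, 4⟩, ⟨6, 3, 4, 4⟩, ⟨9, 4, 11, 7⟩, ⟨9, 2, 11, 1⟩, ⟨23,
  2, 11, 3⟩, ⟨9, 4, 9, 1⟩, ⟨27, 4, 15, 1⟩, ⟨12, 3, 14, 4⟩, ⟨18, 1, 2, 4⟩, ⟨27, 2, 15, 7⟩, ⟨24, 1,
  8, 4⟩, ⟨12, 3, 8, 10⟩, ⟨19, 2, 9, 5⟩, ⟨9, 2, 13, 7⟩, ⟨3, 2, 7, 7⟩, ⟨19, 2, 7, 3⟩, ⟨33, 4, 11,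
  7⟩, ⟨13, 2, 11, 5⟩, ⟨24, 3, 14, 4⟩, ⟨27, 0, 13, 7⟩, ⟨30, 1, 14, 4⟩, ⟨6, 3, 10, 10⟩, ⟨19, 2, 13,
  5⟩, ⟨18, 5, 2, 4⟩, ⟨25, 2, 7, 5⟩, ⟨15, 4, 1, 7⟩, ⟨9, 2, 9, 7⟩, ⟨20, 3, 12, 6⟩, ⟨21, 4, 15, 7⟩,
  ⟨6, 1, 14, 4⟩, ⟨16, 3, 8, 6⟩, ⟨14, 1, 8, 6⟩, ⟨24, 5, 8, 4⟩, ⟨29, 2, 7, 5⟩, ⟨21, 2, 7, 1⟩, ⟨21,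
  0, 15, 7⟩, ⟨27, 4, 5, 7⟩, ⟨15, 4, 5, 7⟩, ⟨6, 3, 16, 4⟩, ⟨14, 3, 14, 6⟩, ⟨18, 3, 20, 4⟩, ⟨26, 3,
  8, 8⟩, ⟨18, 1, 6, 4⟩, ⟨0, 3, 10, 4⟩, ⟨36, 3, 14, 4⟩, ⟨9, 4, 7, 7⟩, ⟨14, 1, 12, 6⟩, ⟨24, 1, 12,
  4⟩, ⟨17, 2, 13, 3⟩, ⟨19, 2, 5, 5⟩, ⟨15, 2, 3, 7⟩, ⟨12, 1, 8, 4⟩, ⟨3, 2, 3, 7⟩, ⟨22, 1, 12, 6⟩,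
  ⟨14, 3, 6, 6⟩, ⟨17, 2, 7, 5⟩, ⟨27, 2, 7, 7⟩, ⟨26, 3, 10, 6⟩, ⟨21, 4, 7, 7⟩, ⟨16, 3, 10, 8⟩, ⟨11,
  4, 9, 3⟩, ⟨8, 1, 6, 6⟩, ⟨19, 4, 15, 5⟩, ⟨29, 2, 13, 3⟩, ⟨23, 2, 9, 5⟩, ⟨19, 4, 9, 3⟩, ⟨18, 3, 0,
  4⟩, ⟨19, 4, 11, 5⟩, ⟨11, 2, 13, 5⟩, ⟨11, 2, 9, 5⟩, ⟨14, 3, 10, 6⟩, ⟨25, 2, 9, 3⟩, ⟨23, 2, 13,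
  5⟩, ⟨16, 3, 12, 6⟩, ⟨33, 2, 5, 7⟩, ⟨19, 2, 17, 5⟩, ⟨27, 4, 1, 7⟩, ⟨17, 2, 9, 3⟩, ⟨14, 1, 4, 6⟩,
  ⟨11, 4, 7, 5⟩, ⟨25, 2, 13, 3⟩, ⟨33, 4, 7, 7⟩, ⟨29, 2, 17, 3⟩, ⟨6, 3, 8, 4⟩, ⟨16, 1, 14, 6⟩, ⟨23,
  4, 11, 5⟩, ⟨21, 4, 3, 7⟩, ⟨31, 2, 9, 5⟩, ⟨22, 3, 14, 6⟩, ⟨16, 3, 4, 2⟩, ⟨22, 1, 8, 6⟩, ⟨17, 4,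
  9, 5⟩, ⟨26, 3, 14, 2⟩, ⟨20, 3, 8, 2⟩, ⟨30, 3, 8, 4⟩, ⟨21, 2, 19, 1⟩, ⟨26, 3, 12, 8⟩, ⟨28, 3, 8,
  6⟩, ⟨13, 2, 13, 3⟩, ⟨22, 3, 14, 2⟩, ⟨27, 2, 5, 1⟩, ⟨14, 3, 14, 2⟩, ⟨15, 2, 5, 1⟩, ⟨20, 1, 14,
  2⟩, ⟨19, 2, 11, 3⟩, ⟨13, 2, 9, 3⟩, ⟨19, 2, 15, 3⟩, ⟨26, 3, 6, 6⟩, ⟨29, 2, 9, 3⟩, ⟨22, 3, 10, 6⟩,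
  ⟨9, 4, 15, 7⟩, ⟨16, 3, 6, 8⟩, ⟨14, 3, 8, 8⟩, ⟨16, 1, 6, 6⟩, ⟨16, 1, 10, 6⟩, ⟨29, 4, 9, 5⟩, ⟨26,
  1, 12, 6⟩, ⟨14, 3, 6, 2⟩, ⟨16, 3, 4, 6⟩, ⟨18, 3, 16, 4⟩, ⟨17, 2, 5, 3⟩, ⟨16, 1, 12, 8⟩, ⟨17, 2,
  15, 5⟩, ⟨19, 4, 7, 5⟩, ⟨36, 3, 6, 4⟩, ⟨11, 4, 3, 5⟩, ⟨26, 1, 8, 6⟩, ⟨26, 3, 14, 6⟩, ⟨13, 4, 9,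
  5⟩, ⟨16, 3, 14, 8⟩, ⟨18, 1, 14, 4⟩, ⟨14, 3, 10, 2⟩, ⟨31, 4, 9, 3⟩, ⟨8, 3, 8, 6⟩, ⟨29, 4, 11, 3⟩,
  ⟨6, 5, 6, 4⟩, ⟨26, 1, 4, 6⟩, ⟨3, 4, 5, 7⟩, ⟨20, 3, 4, 2⟩, ⟨21, 0, 11, 7⟩, ⟨16, 3, 14, 0⟩, ⟨3, 4,
  9, 7⟩, ⟨22, 3, 10, 2⟩, ⟨22, 3, 12, 8⟩, ⟨11, 2, 7, 3⟩, ⟨20, 1, 10, 6⟩, ⟨11, 2, 5, 5⟩, ⟨17, 4, 5,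
  5⟩, ⟨19, 4, 13, 3⟩, ⟨26, 3, 6, 2⟩, ⟨7, 4, 9, 3⟩, ⟨17, 4, 15, 3⟩, ⟨20, 3, 8, 6⟩, ⟨11, 2, 11, 3⟩,
  ⟨28, 1, 6, 6⟩, ⟨29, 4, 13, 5⟩, ⟨0, 3, 6, 4⟩, ⟨22, 3, 6, 6⟩, ⟨14, 3, 2, 6⟩, ⟨12, 1, 12, 4⟩, ⟨15,
  2, 13, 1⟩, ⟨31, 4, 11, 5⟩, ⟨17, 4, 11, 3⟩, ⟨29, 2, 11, 5⟩, ⟨27, 4, 9, 7⟩, ⟨14, 3, 4, 8⟩, ⟨17, 2,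
  11, 9⟩, ⟨7, 2, 9, 5⟩, ⟨18, 3, 4, 4⟩, ⟨9, 2, 5, 7⟩, ⟨21, 4, 9, 1⟩, ⟨31, 2, 11, 3⟩, ⟨17, 2, 11,
  5⟩, ⟨23, 4, 3, 5⟩, ⟨12, 3, 4, 10⟩, ⟨21, 0, 3, 7⟩, ⟨11, 4, 11, 5⟩, ⟨18, 5, 14, 4⟩, ⟨21, 2, 13,
  7⟩, ⟨9, 4, 5, 1⟩, ⟨10, 3, 10, 6⟩, ⟨15, 2, 9, 1⟩, ⟨25, 2, 3, 5⟩, ⟨24, 5, 16, 4⟩, ⟨25, 2, 15, 5⟩,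
  ⟨19, 4, 3, 5⟩, ⟨6, 5, 14, 4⟩, ⟨16, 3, 16, 6⟩, ⟨10, 3, 10, 2⟩, ⟨10, 3, 8, 8⟩, ⟨21, 2, 5, 7⟩, ⟨24,
  1, 4, 4⟩, ⟨6, 1, 10, 4⟩, ⟨12, 5, 8, 4⟩, ⟨28, 3, 10, 8⟩, ⟨25, 4, 5, 5⟩, ⟨26, 1, 16, 6⟩, ⟨15, 2,
  7, 7⟩, ⟨6, 3, 6, 10⟩, ⟨22, 3, 8, 8⟩, ⟨24, 3, 18, 4⟩, ⟨21, 2, 17, 7⟩, ⟨32, 3, 12, 6⟩, ⟨24, 1, 16,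
  4⟩, ⟨24, 5, 4, 4⟩, ⟨20, 3, 12, 2⟩, ⟨20, 3, 10, 8⟩, ⟨22, 3, 16, 8⟩, ⟨6, 3, 12, 4⟩, ⟨7, 2, 11, 3⟩,
  ⟨20, 1, 10, 2⟩, ⟨24, 3, 10, 4⟩, ⟨21, 4, 19, 7⟩, ⟨30, 3, 12, 4⟩, ⟨25, 4, 9, 5⟩, ⟨27, 2, 11, 7⟩,
  ⟨20, 5, 10, 2⟩, ⟨25, 2, 5, 3⟩, ⟨14, 5, 4, 2⟩, ⟨24, 3, 6, 4⟩, ⟨11, 4, 11, 9⟩, ⟨20, 5, 6, 2⟩, ⟨25,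
  4, 11, 3⟩, ⟨12, 3, 6, 4⟩, ⟨30, 1, 10, 4⟩, ⟨12, 5, 4, 4⟩, ⟨22, 3, 4, 8⟩, ⟨30, 5, 10, 4⟩, ⟨17, 4,
  3, 3⟩, ⟨20, 1, 14, 6⟩, ⟨25, 4, 15, 3⟩, ⟨20, 3, 4, 6⟩, ⟨17, 4, 13, 5⟩, ⟨3, 2, 11, 7⟩, ⟨5, 2, 15,
  5⟩, ⟨20, 3, 10, 0⟩, ⟨12, 3, 12, 10⟩, ⟨14, 3, 12, 8⟩, ⟨8, 3, 10, 8⟩, ⟨5, 4, 13, 5⟩, ⟨10, 5, 8,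
  6⟩, ⟨21, 2, 9, 7⟩, ⟨8, 5, 14, 6⟩, ⟨20, 5, 14, 6⟩, ⟨32, 1, 10, 6⟩, ⟨5, 4, 9, 5⟩, ⟨18, 3, 8, 4⟩,
  ⟨21, 2, 11, 5⟩, ⟨16, 3, 6, 4⟩, ⟨12, 3, 10, 4⟩, ⟨21, 2, 11, 1⟩, ⟨21, 4, 11, 7⟩, ⟨13, 2, 7, 5⟩,
  ⟨13, 4, 5, 5⟩, ⟨23, 2, 7, 3⟩, ⟨25, 2, 11, 5⟩, ⟨18, 3, 10, 6⟩, ⟨23, 4, 7, 5⟩, ⟨15, 2, 5, 5⟩, ⟨23,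
  2, 5, 5⟩, ⟨15, 4, 11, 1⟩, ⟨20, 1, 6, 6⟩, ⟨13, 4, 7, 3⟩, ⟨18, 3, 10, 10⟩, ⟨15, 4, 13, 7⟩, ⟨20, 3,
  10, 4⟩, ⟨8, 3, 10, 4⟩, ⟨28, 3, 10, 4⟩, ⟨8, 3, 12, 6⟩, ⟨23, 4, 5, 3⟩, ⟨13, 2, 5, 3⟩, ⟨18, 3, 10,
  2⟩, ⟨28, 3, 12, 6⟩, ⟨8, 3, 12, 2⟩, ⟨28, 1, 10, 6⟩, ⟨23, 2, 15, 3⟩, ⟨15, 2, 15, 3⟩, ⟨20, 3, 16,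
  6⟩, ⟨10, 3, 6, 6⟩, ⟨15, 0, 9, 7⟩, ⟨23, 4, 15, 5⟩, ⟨13, 4, 15, 3⟩, ⟨5, 2, 11, 5⟩, ⟨13, 2, 15, 5⟩,
  ⟨8, 5, 10, 6⟩, ⟨23, 2, 17, 5⟩, ⟨13, 2, 17, 3⟩, ⟨15, 4, 9, 7⟩, ⟨28, 3, 10, 0⟩, ⟨8, 1, 10, 2⟩,
  ⟨15, 2, 11, 7⟩, ⟨18, 3, 12, 4⟩, ⟨18, 1, 10, 4⟩, ⟨18, 5, 10, 4⟩]

def latticePointColors : List (Fin 4) :=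
  [2, 2, 1, 1, 1, 2, 0, 1, 2, 2, 1, 2, 0, 1, 3, 0, 2, 0, 2, 3, 3, 3, 0, 2, 1, 1, 1, 1, 2, 3, 2, 3,
  0, 3, 0, 0, 0, 1, 2, 2, 3, 0, 3, 0, 0, 2, 0, 2, 3, 1, 3, 0, 3, 2, 2, 1, 0, 2, 2, 0, 0, 1, 1, 1,
  1, 2, 2, 3, 1, 1, 0, 0, 3, 2, 2, 2, 1, 2, 0, 2, 3, 3, 3, 2, 3, 2, 0, 0, 3, 2, 1, 1, 0, 1, 0, 2,
  0, 1, 3, 3, 2, 3, 2, 3, 1, 0, 3, 2, 3, 0, 1, 3, 1, 2, 0, 1, 2, 1, 1, 1, 0, 2, 2, 0, 2, 0, 3, 2,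
  3, 3, 3, 3, 1, 0, 3, 1, 3, 2, 1, 3, 1, 1, 0, 2, 3, 1, 0, 3, 1, 2, 1, 1, 0, 3, 2, 3, 2, 1, 0, 3,
  0, 2, 3, 0, 1, 0, 0, 1, 1, 2, 0, 2, 1, 2, 1, 0, 2, 0, 1, 1, 1, 0, 3, 2, 1, 2, 3, 1, 3, 2, 0, 1,
  2, 3, 3, 3, 2, 2, 0, 2, 0, 2, 1, 3, 1, 3, 2, 2, 1, 1, 2, 3, 3, 0, 1, 2, 3, 3, 1, 2, 2, 3, 3, 2,
  1, 2, 0, 3, 3, 0, 1, 3, 0, 2, 2, 1, 3, 1, 2, 2, 0, 0, 0, 3, 3, 2, 0, 1, 0, 0, 0, 2, 3, 3, 0, 0,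
  2, 1, 0, 1, 2, 0, 3, 1, 3, 1, 1, 2, 3, 0, 0, 3, 1, 2, 2, 1, 2, 2, 2, 2, 1, 3, 3, 0, 0, 2, 1, 1,
  0, 0, 3, 2, 1, 0, 1, 0, 2, 3, 0, 2, 3, 0, 1, 3, 3, 0, 1, 3]

def caseTree : CaseTree :=
  .node 301 2 (.node 263 0 (.node 277 0 (.node 260 1 (.node 255 2 (.node 264 1 (.node 229 0 .leaf
  (.node 56 2 .leaf .leaf)) (.node 192 0 .leaf (.node 178 0 .leaf (.node 32 2 .leaf (.node 229 0
  (.node 71 1 (.node 81 0 (.node 68 2 .leaf (.node 148 2 .leaf (.node 138 0 (.node 63 0 .leaf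
  (.node 100 0 (.node 239 1 .leaf (.node 91 1 .leaf (.node 55 2 .leaf .leaf))) .leaf)) .leaf)))
  .leaf) .leaf) (.node 128 2 .leaf .leaf)))))) (.node 229 0 .leaf (.node 56 2 .leaf (.node 100 0
  .leaf (.node 16 2 .leaf (.node 6 0 (.node 227 0 (.node 178 0 (.node 72 0 .leaf (.node 40 1 .leaf
  (.node 119 2 .leaf (.node 71 2 .leaf (.node 159 2 .leaf (.node 68 0 .leaf .leaf)))))) .leaf)
  .leaf) .leaf)))))) (.node 255 1 (.node 207 1 (.node 191 0 (.node 40 2 .leaf (.node 133 1 (.node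
  61 0 (.node 56 1 (.node 72 0 (.node 63 1 (.node 239 1 .leaf .leaf) .leaf) .leaf) .leaf) (.node 1
  2 .leaf (.node 229 0 .leaf (.node 41 2 .leaf .leaf)))) .leaf)) .leaf) .leaf) (.node 264 1 (.node
  100 0 .leaf (.node 229 0 .leaf (.node 56 1 .leaf (.node 114 0 (.node 133 1 .leaf (.node 69 0
  (.node 16 2 (.node 239 1 .leaf (.node 161 2 .leaf (.node 162 1 .leaf (.node 271 0 .leaf (.node
  83 1 .leaf .leaf))))) .leaf) .leaf)) .leaf)))) (.node 207 1 (.node 178 0 (.node 61 0 (.node 119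
  1 .leaf (.node 83 0 (.node 132 1 (.node 79 0 (.node 123 2 .leaf .leaf) .leaf) .leaf) .leaf))
  .leaf) .leaf) .leaf)))) (.node 178 0 .leaf (.node 192 0 .leaf (.node 72 1 (.node 100 0 .leaf
  (.node 229 0 .leaf (.node 56 1 .leaf (.node 114 0 (.node 133 1 .leaf (.node 69 0 (.node 218 1
  (.node 161 2 .leaf (.node 162 1 .leaf (.node 32 1 .leaf (.node 119 0 .leaf (.node 156 2 .leaf
  .leaf))))) .leaf) .leaf)) .leaf)))) .leaf)))) (.node 277 0 (.node 260 1 (.node 211 0 (.node 192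
  1 (.node 56 2 .leaf (.node 144 0 (.node 133 1 .leaf (.node 72 0 (.node 229 0 .leaf (.node 178 0
  (.node 100 1 (.node 92 1 .leaf (.node 81 2 .leaf (.node 155 0 (.node 161 1 (.node 239 1 .leaf
  (.node 55 0 .leaf .leaf)) .leaf) .leaf))) .leaf) .leaf)) .leaf)) .leaf)) .leaf) (.node 56 0
  (.node 264 1 (.node 255 2 .leaf (.node 72 0 .leaf (.node 178 1 .leaf (.node 229 0 (.node 1 1
  .leaf (.node 16 0 (.node 156 1 (.node 140 1 .leaf (.node 268 0 .leaf (.node 41 0 (.node 91 0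
  .leaf (.node 79 0 .leaf .leaf)) .leaf))) .leaf) .leaf)) .leaf)))) .leaf) .leaf)) (.node 65 0
  (.node 192 0 (.node 174 0 (.node 264 1 .leaf (.node 7 0 .leaf (.node 178 1 (.node 97 0 (.node
  133 1 .leaf (.node 229 2 (.node 13 1 .leaf (.node 1 1 .leaf (.node 83 0 .leaf (.node 132 0 .leaf
  (.node 55 1 .leaf .leaf))))) .leaf)) .leaf) .leaf))) (.node 24 2 (.node 56 0 .leaf (.node 100 0
  (.node 83 2 .leaf (.node 123 0 .leaf (.node 132 0 (.node 119 0 .leaf .leaf) .leaf))) .leaf))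
  (.node 40 1 (.node 97 0 (.node 207 0 (.node 191 1 (.node 178 0 .leaf (.node 229 2 (.node 247 2
  (.node 27 2 .leaf (.node 182 1 (.node 227 0 (.node 224 1 .leaf .leaf) (.node 264 1 (.node 94 1
  (.node 273 2 (.node 132 0 .leaf (.node 58 1 .leaf (.node 159 1 (.node 156 0 .leaf .leaf)
  .leaf))) .leaf) .leaf) (.node 156 0 .leaf (.node 159 0 .leaf (.node 258 0 .leaf .leaf)))))
  .leaf)) .leaf) .leaf)) .leaf) .leaf) .leaf) (.node 97 0 (.node 72 0 .leaf (.node 191 1 (.node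
  178 0 .leaf (.node 100 0 (.node 229 0 .leaf (.node 227 0 .leaf (.node 110 1 (.node 58 1 (.node
  299 0 .leaf .leaf) .leaf) .leaf))) .leaf)) .leaf)) .leaf)))) .leaf) (.node 192 1 (.node 144 0
  (.node 56 1 (.node 233 0 .leaf (.node 40 0 (.node 97 1 (.node 255 1 .leaf (.node 207 0 .leaf
  (.node 17 1 (.node 114 0 (.node 247 2 (.node 156 1 .leaf (.node 159 2 (.node 239 1 (.node 224 0
  .leaf .leaf) .leaf) .leaf)) .leaf) .leaf) .leaf))) .leaf) .leaf)) (.node 32 0 .leaf (.node 100 0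
  (.node 119 2 (.node 224 1 .leaf (.node 271 0 .leaf .leaf)) .leaf) .leaf))) .leaf) .leaf)))
  (.node 192 0 (.node 133 1 .leaf (.node 144 1 (.node 211 1 (.node 178 1 (.node 97 0 (.node 16 0
  .leaf (.node 229 2 (.node 13 1 .leaf (.node 207 0 (.node 9 0 (.node 264 1 (.node 94 1 (.node 239
  1 (.node 224 0 .leaf (.node 286 0 (.node 271 1 (.node 55 2 .leaf (.node 119 2 (.node 56 0 .leaf
  .leaf) .leaf)) .leaf) .leaf)) .leaf) .leaf) .leaf) .leaf) .leaf)) .leaf)) .leaf) .leaf) .leaf)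
  .leaf)) .leaf))) (.node 263 0 (.node 260 1 (.node 255 2 (.node 264 1 (.node 229 0 .leaf (.node
  56 2 .leaf .leaf)) (.node 173 2 .leaf (.node 56 0 (.node 178 0 .leaf (.node 16 1 .leaf (.node
  218 2 .leaf (.node 68 0 .leaf (.node 155 0 .leaf (.node 41 0 .leaf (.node 167 1 .leaf (.node 156
  2 .leaf (.node 71 0 .leaf .leaf))))))))) .leaf))) (.node 229 0 .leaf (.node 56 2 .leaf (.node
  100 0 .leaf (.node 218 1 (.node 178 0 (.node 55 0 (.node 83 0 .leaf (.node 140 0 .leaf .leaf))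
  .leaf) (.node 55 0 .leaf (.node 239 2 .leaf .leaf))) .leaf))))) (.node 255 1 (.node 192 0 (.node
  56 0 (.node 264 1 .leaf (.node 1 2 .leaf (.node 40 2 .leaf (.node 100 0 (.node 97 0 (.node 16 1
  (.node 133 1 (.node 222 0 (.node 63 1 (.node 229 0 (.node 41 0 .leaf (.node 92 1 (.node 68 0
  .leaf (.node 81 0 (.node 156 1 (.node 181 0 .leaf .leaf) .leaf) .leaf)) .leaf)) .leaf) .leaf)
  (.node 155 1 .leaf .leaf)) (.node 213 1 .leaf (.node 212 1 .leaf (.node 140 1 (.node 63 0 (.node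
  83 2 .leaf (.node 79 1 .leaf (.node 29 0 .leaf .leaf))) .leaf) .leaf)))) .leaf) (.node 31 2
  (.node 269 0 (.node 3 2 (.node 36 2 (.node 148 2 (.node 13 1 (.node 273 1 .leaf .leaf) (.node
  271 1 .leaf .leaf)) .leaf) .leaf) .leaf) .leaf) .leaf)) (.node 213 0 .leaf (.node 269 2 (.node
  198 0 .leaf (.node 181 2 .leaf (.node 63 0 (.node 55 2 .leaf (.node 58 0 (.node 132 2 .leaf
  .leaf) .leaf)) .leaf))) .leaf)))))) .leaf) (.node 16 1 (.node 229 0 (.node 63 1 .leaf .leaf)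
  (.node 204 0 (.node 132 0 (.node 140 0 .leaf .leaf) .leaf) (.node 183 0 (.node 239 1 (.node 40 2
  .leaf (.node 227 0 (.node 56 1 (.node 97 0 (.node 27 2 .leaf (.node 1 0 (.node 100 0 (.node 119
  1 (.node 273 2 (.node 269 0 (.node 63 1 .leaf .leaf) .leaf) .leaf) .leaf) (.node 119 1 .leaf
  (.node 58 0 (.node 254 0 (.node 132 0 .leaf .leaf) .leaf) .leaf))) (.node 75 0 (.node 63 1
  (.node 155 1 (.node 55 2 .leaf (.node 41 1 .leaf (.node 69 0 (.node 167 1 .leaf (.node 159 1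
  (.node 91 0 .leaf .leaf) .leaf)) .leaf))) .leaf) .leaf) .leaf))) (.node 156 1 .leaf .leaf))
  (.node 119 2 .leaf (.node 128 0 (.node 132 2 .leaf .leaf) .leaf))) .leaf)) .leaf) .leaf)))
  .leaf)) (.node 264 1 (.node 178 0 .leaf (.node 56 1 (.node 100 0 (.node 132 1 .leaf (.node 159 0
  .leaf .leaf)) .leaf) (.node 50 0 (.node 207 1 .leaf (.node 97 0 (.node 100 0 .leaf (.node 40 1
  (.node 227 0 (.node 186 0 .leaf (.node 98 0 (.node 194 0 (.node 27 0 (.node 132 1 (.node 286 0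
  (.node 224 0 .leaf (.node 140 0 .leaf .leaf)) .leaf) .leaf) (.node 213 0 .leaf .leaf)) .leaf)
  .leaf)) .leaf) .leaf)) (.node 100 0 .leaf (.node 213 0 .leaf (.node 167 2 .leaf .leaf)))))
  (.node 213 2 (.node 156 1 .leaf (.node 63 0 .leaf .leaf)) .leaf)))) (.node 61 0 (.node 17 1
  (.node 72 0 .leaf (.node 46 0 (.node 100 0 .leaf (.node 40 1 (.node 55 0 (.node 119 2 (.node 286
  0 .leaf (.node 273 2 .leaf (.node 95 0 (.node 7 1 (.node 162 2 .leaf (.node 299 0 (.node 224 0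
  (.node 29 2 (.node 79 0 .leaf .leaf) .leaf) .leaf) .leaf)) .leaf) .leaf))) .leaf) .leaf) .leaf))
  .leaf)) .leaf) (.node 211 0 .leaf (.node 56 0 (.node 278 0 .leaf (.node 32 0 .leaf (.node 40 1
  (.node 72 0 (.node 197 1 (.node 205 2 .leaf (.node 133 1 (.node 114 0 (.node 100 0 (.node 92 0
  .leaf .leaf) .leaf) .leaf) (.node 119 0 (.node 63 0 .leaf .leaf) .leaf))) .leaf) .leaf) .leaf)))
  .leaf)))))) (.node 260 1 (.node 173 0 (.node 211 0 (.node 255 2 (.node 233 0 .leaf (.node 178 0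
  (.node 83 1 .leaf .leaf) (.node 7 2 .leaf (.node 5 1 (.node 229 2 .leaf (.node 100 0 (.node 132
  0 (.node 161 1 .leaf (.node 224 0 .leaf .leaf)) .leaf) .leaf)) .leaf)))) .leaf) (.node 255 2
  (.node 61 1 .leaf (.node 204 0 .leaf (.node 184 2 (.node 229 0 .leaf (.node 100 0 (.node 23 1
  .leaf (.node 6 2 (.node 218 1 .leaf (.node 30 1 .leaf (.node 156 0 .leaf (.node 81 0 (.node 92 0
  .leaf (.node 269 0 .leaf (.node 258 0 .leaf (.node 119 2 .leaf .leaf)))) .leaf)))) .leaf))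
  .leaf)) (.node 178 1 (.node 7 2 .leaf (.node 32 0 (.node 23 1 .leaf (.node 58 1 .leaf (.node 218
  1 .leaf (.node 79 1 .leaf (.node 299 0 .leaf (.node 224 1 (.node 156 1 .leaf (.node 269 0 .leaf
  .leaf)) .leaf)))))) .leaf)) .leaf)))) (.node 32 0 (.node 178 1 (.node 16 0 .leaf (.node 7 2
  .leaf (.node 247 2 .leaf (.node 151 1 .leaf (.node 218 1 .leaf (.node 68 0 .leaf (.node 156 1
  .leaf .leaf))))))) .leaf) .leaf))) (.node 56 0 (.node 184 2 (.node 144 1 (.node 229 2 .leaf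
  (.node 159 1 .leaf .leaf)) (.node 32 0 .leaf (.node 61 1 .leaf (.node 229 0 (.node 178 1 .leaf
  (.node 255 2 (.node 23 0 (.node 16 0 (.node 65 0 .leaf (.node 258 2 .leaf (.node 132 1 .leaf
  (.node 100 0 (.node 299 1 .leaf (.node 224 2 .leaf .leaf)) .leaf)))) .leaf) .leaf) .leaf))
  .leaf)))) .leaf) .leaf)) (.node 255 1 (.node 192 0 (.node 178 1 (.node 40 0 .leaf (.node 233 0
  (.node 123 1 .leaf (.node 273 1 .leaf .leaf)) (.node 24 2 (.node 56 0 (.node 97 0 (.node 212 1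
  .leaf (.node 234 0 (.node 68 2 (.node 156 1 (.node 63 2 (.node 81 0 .leaf (.node 91 2 .leaf
  .leaf)) .leaf) .leaf) .leaf) .leaf)) .leaf) (.node 32 1 .leaf (.node 16 0 .leaf (.node 7 2 .leaf
  (.node 72 0 (.node 268 0 (.node 41 2 (.node 68 0 .leaf (.node 167 2 (.node 257 0 (.node 159 0
  .leaf (.node 213 1 (.node 258 1 (.node 63 1 (.node 132 0 .leaf (.node 181 2 .leaf (.node 96 0
  .leaf .leaf))) .leaf) .leaf) (.node 132 0 .leaf .leaf))) .leaf) .leaf)) .leaf) .leaf) .leaf)))))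
  (.node 100 0 (.node 271 1 .leaf (.node 234 0 (.node 213 1 .leaf (.node 156 1 .leaf (.node 159 0
  .leaf .leaf))) .leaf)) .leaf)))) .leaf) (.node 65 1 (.node 144 0 (.node 229 2 (.node 63 1 (.node
  159 2 .leaf .leaf) .leaf) (.node 227 0 (.node 3 2 (.node 119 2 .leaf (.node 155 1 .leaf .leaf))
  (.node 161 1 .leaf (.node 7 2 .leaf (.node 79 0 .leaf (.node 40 0 .leaf (.node 110 1 (.node 295
  1 (.node 160 0 .leaf (.node 271 1 .leaf (.node 224 0 (.node 247 0 .leaf (.node 299 0 (.node 41 1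
  .leaf .leaf) (.node 155 1 .leaf .leaf))) .leaf))) .leaf) .leaf)))))) (.node 119 2 .leaf (.node
  128 0 (.node 69 2 (.node 7 2 (.node 68 2 (.node 156 0 (.node 104 0 (.node 63 2 (.node 159 0
  .leaf .leaf) .leaf) .leaf) .leaf) .leaf) .leaf) .leaf) .leaf)))) .leaf) .leaf)) (.node 264 1
  (.node 229 2 .leaf (.node 178 1 (.node 211 0 (.node 100 0 .leaf (.node 55 0 (.node 271 1 .leaf
  (.node 83 0 .leaf .leaf)) .leaf)) (.node 100 0 (.node 6 1 (.node 227 0 (.node 16 0 .leaf (.node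
  207 0 (.node 7 2 .leaf (.node 68 0 (.node 156 1 .leaf .leaf) (.node 79 0 .leaf (.node 161 1
  .leaf (.node 128 1 .leaf (.node 299 0 .leaf (.node 156 1 (.node 32 0 .leaf .leaf) .leaf)))))))
  .leaf)) .leaf) .leaf) .leaf)) .leaf)) (.node 61 1 (.node 56 0 (.node 278 0 .leaf (.node 250 0
  (.node 65 0 (.node 133 1 (.node 81 0 .leaf (.node 268 0 (.node 31 2 (.node 159 0 (.node 140 1
  .leaf (.node 58 1 (.node 3 2 (.node 203 0 (.node 68 0 .leaf (.node 119 0 .leaf (.node 132 0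
  .leaf .leaf))) .leaf) .leaf) .leaf)) .leaf) .leaf) .leaf)) (.node 11 2 (.node 72 0 (.node 156 1
  (.node 68 0 .leaf (.node 63 1 .leaf (.node 119 0 (.node 181 0 .leaf (.node 100 0 (.node 55 1
  (.node 271 0 .leaf .leaf) .leaf) .leaf)) .leaf))) .leaf) (.node 159 0 .leaf .leaf)) .leaf))
  .leaf) (.node 63 2 .leaf .leaf))) (.node 40 0 .leaf (.node 97 0 (.node 25 0 (.node 16 0 .leaf
  (.node 68 0 .leaf .leaf)) .leaf) .leaf))) (.node 204 0 (.node 1 1 .leaf (.node 17 0 .leaf (.node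
  40 0 .leaf (.node 56 1 .leaf (.node 16 0 (.node 68 1 (.node 227 0 (.node 30 2 .leaf (.node 7 1
  (.node 128 1 .leaf (.node 55 0 (.node 286 0 .leaf (.node 63 1 (.node 239 2 .leaf .leaf) .leaf))
  .leaf)) .leaf)) .leaf) .leaf) .leaf))))) (.node 238 1 (.node 56 0 (.node 68 0 .leaf (.node 63 1
  .leaf .leaf)) .leaf) (.node 274 1 (.node 16 0 .leaf (.node 40 0 .leaf (.node 100 0 (.node 227 0
  (.node 41 2 .leaf (.node 97 0 (.node 125 2 .leaf (.node 250 0 (.node 18 0 .leaf (.node 32 0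
  (.node 156 1 (.node 63 1 .leaf (.node 55 1 .leaf .leaf)) .leaf) .leaf)) .leaf)) .leaf)) .leaf)
  .leaf))) (.node 174 0 (.node 100 0 (.node 159 1 .leaf .leaf) .leaf) (.node 17 0 .leaf (.node 65
  0 .leaf (.node 32 0 .leaf (.node 178 1 (.node 56 1 (.node 119 1 (.node 128 0 (.node 273 2 .leaf
  (.node 161 0 .leaf .leaf)) .leaf) .leaf) .leaf) .leaf)))))))))))))

theorem length_latticePoints : latticePoints.length = 308 := by
  decide +kernel

theorem nodup_latticePoints : latticePoints.Nodup := by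
  have h : (latticePoints.map fun p => ((p.a * 64 + p.b) * 64 + p.c) * 64 + p.d).Nodup := by
    decide +kernel
  exact h.of_map

theorem length_latticePointColors : latticePointColors.length = 308 := by
  decide +kernel

theorem pairwise_latticePointColors :
    (latticePoints.zip latticePointColors).Pairwise
      fun x y => x.2 = y.2 → x.1.unitDist y.1 = false := by
  decide +kernel

theorem refutesEqualColors_latticePoints :
    refutesEqualColors latticePoints caseTree 306 307 304 305 = true := by
  decide +kernel

/-! ### The non-monochromatic pair -/

/-- The point of the plane with the given index. -/
noncomputable def planePoint (i : Fin 308) : EuclideanSpace ℝ (Fin 2) :=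
  (latticePoints[i]'(by rw [length_latticePoints]; exact i.isLt)).toPlane

theorem planePoint_injective : Function.Injective planePoint := by
  intro i j h
  exact Fin.ext (nodup_latticePoints.getElem_inj_iff.mp (LatticePoint.toPlane_injective h))

theorem dist_planePoint_eq_one_iff (i j : Fin 308) :
    dist (planePoint i) (planePoint j) = 1 ↔
      (latticePoints[i]'(by rw [length_latticePoints]; exact i.isLt)).unitDist
        (latticePoints[j]'(by rw [length_latticePoints]; exact j.isLt)) = true :=
  LatticePoint.dist_toPlane_eq_one_iff _ _

set_option maxRecDepth 10000 in
theorem planePoint_306 : planePoint 306 = LatticePoint.toPlane ⟨18, 1, 10, 4⟩ := rfl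

set_option maxRecDepth 10000 in
theorem planePoint_307 : planePoint 307 = LatticePoint.toPlane ⟨18, 5, 10, 4⟩ := rfl

theorem dist_planePoint_pair : dist (planePoint 306) (planePoint 307) = √(11 / 3) := by
  have h33 : √33 ^ 2 = 33 := Real.sq_sqrt (by norm_num)
  rw [planePoint_306, planePoint_307, EuclideanSpace.dist_eq]
  congr 1
  simp only [LatticePoint.toPlane, Fin.sum_univ_two, Real.dist_eq, sq_abs, PiLp.toLp_apply,
    Matrix.cons_val_zero, Matrix.cons_val_one]
  push_cast
  linear_combination h33 / 9

/-- A proper four-coloring of the points. -/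
def planePointColor (i : Fin 308) : Fin 4 :=
  latticePointColors[i]'(by rw [length_latticePointColors]; exact i.isLt)

theorem planePointColor_ne {i j : Fin 308} (h : dist (planePoint i) (planePoint j) = 1) :
    planePointColor i ≠ planePointColor j := by
  wlog hij : i < j generalizing i j
  · rcases (not_lt.mp hij).lt_or_eq with hji | rfl
    · exact (this (by rwa [dist_comm]) hji).symm
    · simp at h
  intro hcol
  have hlen : (latticePoints.zip latticePointColors).length = 308 := by
    simp [length_latticePoints, length_latticePointColors]
  have hpair := List.pairwise_iff_getElem.mp pairwise_latticePointColors i j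
    (by rw [hlen]; exact i.isLt) (by rw [hlen]; exact j.isLt) hij
  simp only [List.getElem_zip] at hpair
  rw [dist_planePoint_eq_one_iff] at h
  exact Bool.false_ne_true ((hpair hcol).symm.trans h)

theorem exists_perm_fin_four {x y z : Fin 4} (hxy : x ≠ y) (hxz : x ≠ z) (hyz : y ≠ z) :
    ∃ σ : Equiv.Perm (Fin 4), σ x = 0 ∧ σ y = 1 ∧ σ z = 2 := by
  revert x y z
  decide +kernel

theorem planePoint_pair_ne (c : Fin 308 → Fin 4)
    (hc : ∀ i j, dist (planePoint i) (planePoint j) = 1 → c i ≠ c j) : c 306 ≠ c 307 := by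
  have hpx : c 306 ≠ c 304 := hc _ _ ((dist_planePoint_eq_one_iff _ _).mpr (by decide +kernel))
  have hpy : c 306 ≠ c 305 := hc _ _ ((dist_planePoint_eq_one_iff _ _).mpr (by decide +kernel))
  have hxy : c 304 ≠ c 305 := hc _ _ ((dist_planePoint_eq_one_iff _ _).mpr (by decide +kernel))
  obtain ⟨σ, hp, hx, hy⟩ := exists_perm_fin_four hpx hpy hxy
  have hq := ne_of_refutesEqualColors refutesEqualColors_latticePoints
    (fun v => σ (c (Fin.ofNat 308 v))) (fun v w hv hw h => ?_) hp hx hy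
  · intro hpq
    exact hq (by rw [← hp, hpq]; rfl)
  · rw [length_latticePoints] at hv hw
    refine σ.injective.ne (hc _ _ ((dist_planePoint_eq_one_iff _ _).mpr ?_))
    simpa only [Fin.getElem_fin, Fin.val_ofNat, Nat.mod_eq_of_lt hv, Nat.mod_eq_of_lt hw] using h

theorem stmt_8 :
    ∃ S : Set (EuclideanSpace ℝ (Fin 2)), S.Finite ∧ S.ncard = 308 ∧
      ∃ p ∈ S, ∃ q ∈ S, dist p q = Real.sqrt (11 / 3) ∧
        (∃ c : EuclideanSpace ℝ (Fin 2) → Fin 4, (∀ x ∈ S, ∀ y ∈ S, dist x y = 1 → c x ≠ c y)) ∧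
        (∀ c : EuclideanSpace ℝ (Fin 2) → Fin 4, (∀ x ∈ S, ∀ y ∈ S, dist x y = 1 → c x ≠ c y) → c p ≠ c q) := by
  refine ⟨Set.range planePoint, Set.finite_range _, ?_, planePoint 306, Set.mem_range_self _,
    planePoint 307, Set.mem_range_self _, dist_planePoint_pair,
    ⟨Function.extend planePoint planePointColor 0, ?_⟩, fun c hc => ?_⟩
  · rw [← Nat.card_coe_set_eq, Nat.card_range_of_injective planePoint_injective, Nat.card_fin]
  · rintro _ ⟨i, rfl⟩ _ ⟨j, rfl⟩ h
    rw [planePoint_injective.extend_apply, planePoint_injective.extend_apply]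
    exact planePointColor_ne h
  · exact planePoint_pair_ne (c ∘ planePoint)
      fun i j h => hc _ (Set.mem_range_self _) _ (Set.mem_range_self _) h
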